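/- Removing lineage commutes with grouping: for every X : Multiset (κ × (θ × α)), regrouping the unnested lineage-keyed groups by the outer key alone equals grouping the lineage-stripped input, i.e. groupBy ((groupBy (X.map (fun p => ((p.1, p.2.1), p.2.2)))).bind (fun q => q.2.map (fun a => (q.1.1, a)))) = groupBy (X.map (fun p => (p.1, p.2.2))). -/

import Mathlib

/-- Group a bag of key-value pairs by key. -/
def groupBy {κ α : Type*} [DecidableEq κ] (X : Multiset (κ × α)) :
    Multiset (κ × Multiset α) :=
  ((X.map Prod.fst).dedup).map
    (fun k => (k, (X.filter (fun p => p.1 = k)).map Prod.snd))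

theorem bind_filter_fst_eq {κ α : Type*} [DecidableEq κ] (Y : Multiset (κ × α)) :
    ((Y.map Prod.fst).dedup).bind (fun k => Y.filter (fun p => p.1 = k)) = Y := by
  classical
  ext a
  rw [Multiset.count_bind]
  simp only [Multiset.count_filter]
  change ∑ k ∈ (Y.map Prod.fst).toFinset, (if a.1 = k then Multiset.count a Y else 0) = _
  rw [Finset.sum_ite_eq]
  split_ifs with h
  · rfl
  · symm
    rw [Multiset.count_eq_zero]
    intro ha
    exact h (Multiset.mem_toFinset.2 (Multiset.mem_map_of_mem _ ha))

theorem groupBy_unnest {κ α β : Type*} [DecidableEq κ] (Y : Multiset (κ × α)) (f : κ → β) :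
    (groupBy Y).bind (fun q => q.2.map (fun a => (f q.1, a)))
      = Y.map (fun p => (f p.1, p.2)) := by
  conv_rhs => rw [← bind_filter_fst_eq Y]
  rw [groupBy, Multiset.bind_map, Multiset.map_bind]
  refine Multiset.bind_congr fun k _ => ?_
  rw [Multiset.map_map]
  refine Multiset.map_congr rfl fun p hp => ?_
  simp [(Multiset.mem_filter.1 hp).2]

/-- Removing lineage commutes with grouping: regrouping the unnested
lineage-keyed groups by the outer key alone equals grouping the
lineage-stripped input. -/
theorem groupBy_remove_lineage {κ θ α : Type*} [DecidableEq κ] [DecidableEq θ]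
    (X : Multiset (κ × (θ × α))) :
    groupBy ((groupBy (X.map (fun p => ((p.1, p.2.1), p.2.2)))).bind
        (fun q => q.2.map (fun a => (q.1.1, a))))
      = groupBy (X.map (fun p => (p.1, p.2.2))) := by
  rw [groupBy_unnest _ (fun k : κ × θ => k.1), Multiset.map_map]
  rfl
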